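/- For every real t with |t| ≤ π, t² = 4 Σ_{k odd, k ≥ 1} (1 − cos(kt)) / k² − 4 Σ_{k even, k ≥ 2} (1 − cos(kt)) / k². Equivalently, the odd Fourier modes of the 2π-periodic extension of t² give exactly the squared ℓ²-distance of the MDS embedding of the geodesic circle, and the error of MDS comes precisely from the even modes: (θ₁ − θ₂)² = ‖γ(θ₁) − γ(θ₂)‖²_{ℓ²} − 4 Σ_{k even} (1 − cos(k(θ₁ − θ₂))) / k² whenever |θ₁ − θ₂| ≤ π. -/

import Mathlib

open Real

/-- The coordinates of the MDS embedding `γ` of the geodesic circle into `ℓ²`: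
for `j = 0, 1, 2, …`, coordinate `2j` is `(√2/(2j+1)) cos((2j+1)θ)` and
coordinate `2j+1` is `(√2/(2j+1)) sin((2j+1)θ)`. -/
noncomputable def mdsCircleCoord (θ : ℝ) (i : ℕ) : ℝ :=
  if i % 2 = 0 then Real.sqrt 2 / ((i : ℝ) + 1) * Real.cos (((i : ℝ) + 1) * θ)
  else Real.sqrt 2 / (i : ℝ) * Real.sin ((i : ℝ) * θ)

/-!
For `|t| ≤ 2π` the Fourier series of the Bernoulli polynomial `B₂` gives
`∑_{k ≥ 1} (1 - cos (k t)) / k² = π |t| / 2 - t² / 4`.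
The even modes at `t` are a quarter of all modes at `2 t`, hence sum to `(π |t| - t²) / 4` for
`|t| ≤ π`, which leaves `π |t| / 4` for the odd modes: the linear terms cancel in the difference.
The coordinates `2 j` and `2 j + 1` of `γ` trace a circle of radius `√2 / (2 j + 1)` at frequency
`2 j + 1`, so their contribution to the squared distance is exactly four times the `j`-th odd mode.
-/

theorem hasSum_even_of_hasSum_of_hasSum_odd {G : Type*} [AddCommGroup G] [UniformSpace G]
    [IsUniformAddGroup G] [CompleteSpace G] [T2Space G] {f : ℕ → G} {a b : G} (hf : HasSum f a)
    (hodd : HasSum (fun k ↦ f (2 * k + 1)) b) : HasSum (fun k ↦ f (2 * k)) (a - b) := by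
  have heven : HasSum (fun k ↦ f (2 * k)) (∑' k, f (2 * k)) :=
    (hf.summable.comp_injective (mul_right_injective₀ two_ne_zero)).hasSum
  rwa [← (heven.even_add_odd hodd).unique hf, add_sub_cancel_right]

theorem hasSum_of_hasSum_even_add_odd {f : ℕ → ℝ} {a : ℝ} (hf : ∀ n, 0 ≤ f n)
    (hpair : HasSum (fun k ↦ f (2 * k) + f (2 * k + 1)) a) : HasSum f a := by
  have heven : Summable fun k ↦ f (2 * k) :=
    hpair.summable.of_nonneg_of_le (fun k ↦ hf _) fun k ↦ le_add_of_nonneg_right (hf _)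
  have hodd : Summable fun k ↦ f (2 * k + 1) :=
    hpair.summable.of_nonneg_of_le (fun k ↦ hf _) fun k ↦ le_add_of_nonneg_left (hf _)
  rw [hpair.unique (heven.hasSum.add hodd.hasSum)]
  exact heven.hasSum.even_add_odd hodd.hasSum

theorem sq_sub_cos_add_sq_sub_sin (r x y : ℝ) :
    (r * cos x - r * cos y) ^ 2 + (r * sin x - r * sin y) ^ 2 = 2 * r ^ 2 * (1 - cos (x - y)) := by
  rw [cos_sub]
  linear_combination r ^ 2 * sin_sq_add_cos_sq x + r ^ 2 * sin_sq_add_cos_sq y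

theorem summable_one_sub_cos_div_sq (t : ℝ) :
    Summable fun n : ℕ ↦ (1 - cos (n * t)) / (n : ℝ) ^ 2 := by
  have hbound : Summable fun n : ℕ ↦ 2 / (n : ℝ) ^ 2 := by
    simpa only [mul_one_div] using hasSum_zeta_two.summable.mul_left 2
  refine hbound.of_nonneg_of_le (fun n ↦ ?_) fun n ↦ ?_
  · exact div_nonneg (sub_nonneg.2 (cos_le_one _)) (sq_nonneg _)
  · gcongr
    linarith [neg_one_le_cos (n * t)]

theorem hasSum_cos_div_sq {t : ℝ} (h0 : 0 ≤ t) (h1 : t ≤ 2 * π) :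
    HasSum (fun n : ℕ ↦ cos (n * t) / (n : ℝ) ^ 2) (π ^ 2 / 6 - π * t / 2 + t ^ 2 / 4) := by
  have hmem : t / (2 * π) ∈ Set.Icc (0 : ℝ) 1 :=
    ⟨by positivity, div_le_one_of_le₀ h1 (by positivity)⟩
  have hbernoulli := hasSum_one_div_nat_pow_mul_cos one_ne_zero hmem
  rw [← bernoulliFun, mul_one, bernoulliFun_two] at hbernoulli
  convert! hbernoulli using 1
  · ext n
    rw [show 2 * π * n * (t / (2 * π)) = n * t by field_simp, one_div_mul_eq_div]
  · simp only [Nat.factorial]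
    field_simp
    ring

theorem hasSum_one_sub_cos_div_sq {t : ℝ} (ht : |t| ≤ 2 * π) :
    HasSum (fun n : ℕ ↦ (1 - cos (n * t)) / (n : ℝ) ^ 2) (π * |t| / 2 - t ^ 2 / 4) := by
  have hcos : ∀ n : ℕ, cos (n * |t|) = cos (n * t) := fun n ↦ by
    rw [← cos_abs (n * t), abs_mul, Nat.abs_cast]
  convert! hasSum_zeta_two.sub (hasSum_cos_div_sq (abs_nonneg t) ht) using 1
  · simp only [hcos, sub_div]
  · rw [sq_abs]
    ring

theorem hasSum_one_sub_cos_succ_div_sq {t : ℝ} (ht : |t| ≤ 2 * π) :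
    HasSum (fun n : ℕ ↦ (1 - cos ((n + 1) * t)) / ((n : ℝ) + 1) ^ 2)
      (π * |t| / 2 - t ^ 2 / 4) := by
  simpa using (hasSum_nat_add_iff' 1).2 (hasSum_one_sub_cos_div_sq ht)

theorem hasSum_one_sub_cos_even_div_sq {t : ℝ} (ht : |t| ≤ π) :
    HasSum (fun j : ℕ ↦ (1 - cos ((2 * j + 2) * t)) / (2 * (j : ℝ) + 2) ^ 2)
      ((π * |t| - t ^ 2) / 4) := by
  have habs : |2 * t| = 2 * |t| := by rw [abs_mul, abs_two]
  have hdouble : |2 * t| ≤ 2 * π := by linarith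
  convert! (hasSum_one_sub_cos_succ_div_sq hdouble).div_const 4 using 1
  · ext j
    rw [show (2 * (j : ℝ) + 2) * t = (j + 1) * (2 * t) by ring, div_div]
    ring
  · rw [habs]
    ring

theorem hasSum_one_sub_cos_odd_div_sq {t : ℝ} (ht : |t| ≤ π) :
    HasSum (fun j : ℕ ↦ (1 - cos ((2 * j + 1) * t)) / (2 * (j : ℝ) + 1) ^ 2) (π * |t| / 4) := by
  have hall := hasSum_one_sub_cos_succ_div_sq (ht.trans (by linarith [pi_pos]))
  have hodd := hasSum_even_of_hasSum_of_hasSum_odd hall (b := (π * |t| - t ^ 2) / 4) <| by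
    convert! hasSum_one_sub_cos_even_div_sq ht using 2 with j
    rw [show ((2 * j + 1 : ℕ) : ℝ) + 1 = 2 * j + 2 by push_cast; ring]
  convert! hodd using 1
  · simp only [Nat.cast_mul, Nat.cast_ofNat]
  · ring

theorem sq_eq_tsum_odd_sub_tsum_even {t : ℝ} (ht : |t| ≤ π) :
    t ^ 2 = 4 * (∑' j : ℕ, (1 - cos ((2 * j + 1) * t)) / (2 * (j : ℝ) + 1) ^ 2)
      - 4 * ∑' j : ℕ, (1 - cos ((2 * j + 2) * t)) / (2 * (j : ℝ) + 2) ^ 2 := by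
  rw [(hasSum_one_sub_cos_odd_div_sq ht).tsum_eq, (hasSum_one_sub_cos_even_div_sq ht).tsum_eq]
  ring

theorem mdsCircleCoord_two_mul (θ : ℝ) (j : ℕ) :
    mdsCircleCoord θ (2 * j) = √2 / (2 * j + 1) * cos ((2 * j + 1) * θ) := by
  simp [mdsCircleCoord]

theorem mdsCircleCoord_two_mul_add_one (θ : ℝ) (j : ℕ) :
    mdsCircleCoord θ (2 * j + 1) = √2 / (2 * j + 1) * sin ((2 * j + 1) * θ) := by
  simp [mdsCircleCoord, Nat.add_mod]

theorem sq_mdsCircleCoord_sub_pair (θ₁ θ₂ : ℝ) (j : ℕ) :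
    (mdsCircleCoord θ₁ (2 * j) - mdsCircleCoord θ₂ (2 * j)) ^ 2
        + (mdsCircleCoord θ₁ (2 * j + 1) - mdsCircleCoord θ₂ (2 * j + 1)) ^ 2
      = 4 * ((1 - cos ((2 * j + 1) * (θ₁ - θ₂))) / (2 * (j : ℝ) + 1) ^ 2) := by
  simp only [mdsCircleCoord_two_mul, mdsCircleCoord_two_mul_add_one]
  rw [sq_sub_cos_add_sq_sub_sin, ← mul_sub, div_pow, sq_sqrt zero_le_two]
  ring

theorem hasSum_sq_mdsCircleCoord_sub (θ₁ θ₂ : ℝ) :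
    HasSum (fun i ↦ (mdsCircleCoord θ₁ i - mdsCircleCoord θ₂ i) ^ 2)
      (4 * ∑' j : ℕ, (1 - cos ((2 * j + 1) * (θ₁ - θ₂))) / (2 * (j : ℝ) + 1) ^ 2) := by
  have hodd : Summable fun j : ℕ ↦
      (1 - cos ((2 * j + 1) * (θ₁ - θ₂))) / (2 * (j : ℝ) + 1) ^ 2 := by
    have hinj : Function.Injective fun j : ℕ ↦ 2 * j + 1 := fun i j h ↦ by simpa using h
    exact_mod_cast (summable_one_sub_cos_div_sq (θ₁ - θ₂)).comp_injective hinj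
  refine hasSum_of_hasSum_even_add_odd (fun i ↦ sq_nonneg _) ?_
  simpa only [sq_mdsCircleCoord_sub_pair] using hodd.hasSum.mul_left 4

/-- **Proposition (the error of MDS comes from the even Fourier modes).**
For `|t| ≤ π`,
`t² = 4 ∑_{k odd} (1 − cos(kt))/k² − 4 ∑_{k even} (1 − cos(kt))/k²`;
equivalently, `(θ₁ − θ₂)² = ‖γ(θ₁) − γ(θ₂)‖²_{ℓ²} − 4 ∑_{k even} (1 − cos(k(θ₁−θ₂)))/k²`
whenever `|θ₁ − θ₂| ≤ π`, where `γ` is the MDS embedding of the geodesic circle. -/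
theorem mds_circle_even_modes_error :
    (∀ t : ℝ, |t| ≤ π →
      t^2 = 4 * (∑' j : ℕ, (1 - Real.cos ((2 * (j : ℝ) + 1) * t)) / (2 * (j : ℝ) + 1)^2)
          - 4 * (∑' j : ℕ, (1 - Real.cos ((2 * (j : ℝ) + 2) * t)) / (2 * (j : ℝ) + 2)^2)) ∧
    (∀ θ₁ θ₂ : ℝ, |θ₁ - θ₂| ≤ π →
      (θ₁ - θ₂)^2
        = (∑' i : ℕ, (mdsCircleCoord θ₁ i - mdsCircleCoord θ₂ i)^2)
          - 4 * (∑' j : ℕ,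
              (1 - Real.cos ((2 * (j : ℝ) + 2) * (θ₁ - θ₂))) / (2 * (j : ℝ) + 2)^2)) := by
  refine ⟨fun t ht ↦ sq_eq_tsum_odd_sub_tsum_even ht, fun θ₁ θ₂ hθ ↦ ?_⟩
  rw [(hasSum_sq_mdsCircleCoord_sub θ₁ θ₂).tsum_eq]
  exact sq_eq_tsum_odd_sub_tsum_even hθ
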